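/- Let D be a bounded simply connected domain in ℂ and φ a conformal map of the open unit disk 𝔻 onto D. If the boundary of D is locally connected, then φ extends to a continuous map from the closed unit disk onto the closure of D. -/

import Mathlib

open Metric

lemma cara_log_nhds (K D : Set ℂ) (hD : IsOpen D) (hDc : IsPreconnected D) (hKD : Disjoint K D)
    {w₁ w₀ : ℂ} (h1 : w₁ ∈ D) (h0 : w₀ ∈ D) :
    ∃ g : ℂ → ℂ, ContinuousOn g K ∧ ∀ z ∈ K, Complex.exp (g z) * (z - w₀) = z - w₁ := by
  have hne : ∀ w ∈ D, ∀ z ∈ K, z - w ≠ 0 := fun w hw z hz h =>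
    hKD.ne_of_mem hz hw (sub_eq_zero.1 h)
  let P : ℂ → ℂ → Prop := fun w₀ w₁ => 
    ∃ g : ℂ → ℂ, ContinuousOn g K ∧ ∀ z ∈ K, Complex.exp (g z) * (z - w₀) = z - w₁
  refine hDc.induction₂ P ?_ ?_ ?_ h0 h1
  · intro w hw
    obtain ⟨ε, hε, hb⟩ := Metric.isOpen_iff.1 hD w hw
    filter_upwards [mem_nhdsWithin_of_mem_nhds (ball_mem_nhds w hε)] with w' hw'
    have key : ∀ z ∈ K, (z - w') / (z - w) ∈ Complex.slitPlane := by
      intro z hz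
      have h3 : (z - w') / (z - w) = 1 + (w - w') / (z - w) := by
        field_simp [hne w hw z hz]
        ring
      rw [h3]
      apply Complex.mem_slitPlane_of_norm_lt_one
      rw [norm_div, div_lt_one (norm_pos_iff.2 (hne w hw z hz))]
      have : ε ≤ ‖z - w‖ := by
        by_contra hlt
        push Not at hlt
        exact hKD.ne_of_mem hz (hb (by simpa [dist_eq_norm] using hlt)) rfl
      rw [mem_ball, dist_comm, dist_eq_norm] at hw'
      linarith
    refine ⟨fun z => Complex.log ((z - w') / (z - w)), ?_, ?_⟩
    · refine ContinuousOn.clog ?_ key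
      exact ContinuousOn.div (by fun_prop) (by fun_prop) (hne w hw)
    · intro z hz
      rw [Complex.exp_log (Complex.slitPlane_ne_zero (key z hz)), div_mul_cancel₀ _ (hne w hw z hz)]
  · rintro x y z hx hy hz ⟨g, hg, hg'⟩ ⟨g2, hg2, hg2'⟩
    refine ⟨fun z => g z + g2 z, hg.add hg2, fun u hu => ?_⟩
    rw [Complex.exp_add, ← hg2' u hu, ← hg' u hu]; ring
  · rintro x y hx hy ⟨g, hg, hg'⟩
    refine ⟨fun z => - g z, hg.neg, fun u hu => ?_⟩
    rw [← hg' u hu, ← mul_assoc, ← Complex.exp_add]; simp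

lemma cara_log_ball {c w₁ w₀ : ℂ} {ε : ℝ} (h1 : w₁ ∉ ball c ε) (h0 : w₀ ∉ ball c ε) :
    ∃ g : ℂ → ℂ, ContinuousOn g (ball c ε) ∧
      ∀ z ∈ ball c ε, Complex.exp (g z) * (z - w₀) = z - w₁ := by
  have key : ∀ w ∉ ball c ε, ∃ g : ℂ → ℂ, ContinuousOn g (ball c ε) ∧
      ∀ z ∈ ball c ε, Complex.exp (g z) = z - w := by
    intro w hw
    by_cases hε : 0 < ε
    swap
    · refine ⟨0, ?_, ?_⟩ <;> simp [ball_eq_empty.2 (not_lt.1 hε)]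
    have hw' : ε ≤ ‖c - w‖ := by simpa [dist_eq_norm, norm_sub_rev] using hw
    have hcw : c - w ≠ 0 := norm_pos_iff.1 (by linarith)
    have h2 : ∀ z ∈ ball c ε, 1 + (z - c) / (c - w) ∈ Complex.slitPlane := by
      intro z hz
      apply Complex.mem_slitPlane_of_norm_lt_one
      rw [norm_div, div_lt_one (norm_pos_iff.2 hcw)]
      rw [mem_ball, dist_eq_norm] at hz
      linarith
    refine ⟨fun z => Complex.log (c - w) + Complex.log (1 + (z - c) / (c - w)), ?_, ?_⟩
    · exact continuousOn_const.add (ContinuousOn.clog (by fun_prop) h2)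
    · intro z hz
      rw [Complex.exp_add, Complex.exp_log hcw,
        Complex.exp_log (Complex.slitPlane_ne_zero (h2 z hz))]
      field_simp
      ring
  obtain ⟨g, hg, hg'⟩ := key w₁ h1
  obtain ⟨k, hk, hk'⟩ := key w₀ h0
  refine ⟨fun z => g z - k z, hg.sub hk, fun z hz => ?_⟩
  rw [← hg' z hz, ← hk' z hz, ← Complex.exp_add]; simp

lemma cara_const {X : Type*} [TopologicalSpace X] {L : Set X} (hL : IsPreconnected L) {k : X → ℂ}
    (hk : ContinuousOn k L) (h : ∀ x ∈ L, Complex.exp (k x) = 1) {x y : X} (hx : x ∈ L)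
    (hy : y ∈ L) : k x = k y := by
  have hc : (Set.range (fun n : ℤ => (n : ℂ) * (2 * Real.pi * Complex.I))).Countable :=
    Set.countable_range _
  have := hc.isTotallyDisconnected (k '' L) ?_ (hL.image k hk)
  · exact this ⟨x, hx, rfl⟩ ⟨y, hy, rfl⟩
  · rintro _ ⟨x, hx, rfl⟩
    obtain ⟨n, hn⟩ := Complex.exp_eq_one_iff.1 (h x hx)
    exact ⟨n, hn.symm⟩

lemma cara_noretract (F : ℂ → ℂ) (hF : Continuous F) (h0 : ∀ z, F z ≠ 0) (w : ℂ) (R : ℝ)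
    (hR : ∀ z, R ≤ ‖z - w‖ → F z = z - w) : False := by
  have hsc : IsSimplyConnected (Set.univ : Set ℂ) := by
    have : ContractibleSpace (Set.univ : Set ℂ) := convex_univ.contractibleSpace Set.univ_nonempty
    exact (inferInstance : SimplyConnectedSpace (Set.univ : Set ℂ))
  obtain ⟨g, hg, hg'⟩ := Complex.exists_continuousOn_eqOn_exp_comp hsc isOpen_univ
    (g := F) hF.continuousOn (by rintro ⟨z, -, hz⟩; exact h0 z hz)
  have hgc : Continuous g := continuousOn_univ.1 hg
  set r : ℝ := max R 1
  have hr : 0 < r := lt_of_lt_of_le one_pos (le_max_right _ _)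
  have hr0 : (r : ℂ) ≠ 0 := by exact_mod_cast hr.ne'
  let k : ℝ → ℂ := fun t => g (w + r * Complex.exp (t * Complex.I)) - Complex.log r - t * Complex.I
  have hk : Continuous k := by fun_prop
  have hk1 : ∀ t ∈ (Set.univ : Set ℝ), Complex.exp (k t) = 1 := by
    intro t _
    have := hg' (Set.mem_univ (w + r * Complex.exp (t * Complex.I)))
    simp only [Function.comp] at this
    simp only [k]
    rw [Complex.exp_sub, Complex.exp_sub, this, hR, Complex.exp_log hr0]
    · field_simp [Complex.exp_ne_zero]
      ring
    · simp [Complex.norm_exp_ofReal_mul_I, abs_of_pos hr, r]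
  have := cara_const isPreconnected_univ hk.continuousOn hk1 (Set.mem_univ 0)
    (Set.mem_univ (2 * Real.pi))
  simp [k] at this
  have h3 : 2 * (Real.pi : ℂ) * Complex.I = 0 := by linear_combination this
  simp [Real.pi_ne_zero] at h3

lemma cara_sep (D W K₂ L : Set ℂ) (hD : IsOpen D) (hDc : IsPreconnected D)
    (hbd : Bornology.IsBounded D) (hWD : W ⊆ D)
    (hWf : frontier W ⊆ frontier D ∪ K₂) (hK₂ : IsClosed K₂) 
    (hLK : K₂ ∩ frontier D ⊆ L) (hLc : IsPreconnected L) (hLf : L ⊆ frontier D)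
    {a w₀ w₁ c : ℂ} {ε : ℝ} (ha : a ∈ L)
    (hK₂b : K₂ ⊆ ball c ε) (hLb : L ⊆ ball c ε) (h1 : w₁ ∈ W) (h0 : w₀ ∈ D) (h0' : w₀ ∉ closure W)
    (h1b : w₁ ∉ ball c ε) (h0b : w₀ ∉ ball c ε) : False := by
  classical
  have hdis : Disjoint (frontier D) D := by
    rw [hD.frontier_eq]; exact Set.disjoint_sdiff_left
  obtain ⟨gA, hgA, hgA'⟩ := cara_log_nhds (frontier D) D hD hDc hdis (hWD h1) h0
  obtain ⟨gB, hgB, hgB'⟩ := cara_log_ball h1b h0b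
  set k : ℂ → ℂ := fun z => gA z - gB z
  have hk : ContinuousOn k L := (hgA.mono hLf).sub (hgB.mono hLb)
  have hk1 : ∀ z ∈ L, Complex.exp (k z) = 1 := by
    intro z hz
    have e1 := hgA' z (hLf hz)
    have e2 := hgB' z (hLb hz)
    have hne : z - w₀ ≠ 0 := fun h => hdis.ne_of_mem (hLf hz) h0 (sub_eq_zero.1 h)
    have := mul_right_cancel₀ hne (e1.trans e2.symm)
    simp only [k]
    rw [Complex.exp_sub, this, div_self (Complex.exp_ne_zero _)]
  let G₀ : ℂ → ℂ := fun z => if z ∈ frontier D then gA z else gB z + k a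
  have hG₀A : Set.EqOn G₀ gA (frontier D) := fun z hz => if_pos hz
  have hG₀B : Set.EqOn G₀ (fun z => gB z + k a) K₂ := by
    intro z hz
    by_cases hzD : z ∈ frontier D
    · have hzL := hLK ⟨hz, hzD⟩
      have := cara_const hLc hk hk1 hzL ha
      simp only [G₀, if_pos hzD, ← this]
      simp [k]
    · exact if_neg hzD
  have hG₀ : ContinuousOn G₀ (frontier D ∪ K₂) :=
    ContinuousOn.union_of_isClosed (hgA.congr hG₀A)
      (((hgB.mono hK₂b).add continuousOn_const).congr hG₀B) isClosed_frontier hK₂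
  have hG₀e : ∀ z ∈ frontier D ∪ K₂, Complex.exp (G₀ z) * (z - w₀) = z - w₁ := by
    rintro z (hz | hz)
    · rw [hG₀A hz]; exact hgA' z hz
    · rw [hG₀B hz]
      simp only [Complex.exp_add, hk1 a ha, mul_one]
      exact hgB' z (hK₂b hz)
  obtain ⟨G, hG⟩ := ContinuousMap.exists_restrict_eq (isClosed_frontier.union hK₂)
    ⟨(frontier D ∪ K₂).domRestrict G₀, continuousOn_iff_continuous_domRestrict.1 hG₀⟩
  have hGe : ∀ z ∈ frontier D ∪ K₂, G z = G₀ z := by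
    intro z hz
    have := congrArg (fun f => f ⟨z, hz⟩) hG
    simpa using this
  let F : ℂ → ℂ := fun z => if z ∈ W then Complex.exp (G z) * (z - w₀) else z - w₁
  have hF : Continuous F := by
    refine Continuous.if ?_ (by fun_prop) (by fun_prop)
    intro z hz
    have hz' := hWf hz
    rw [hGe z hz', hG₀e z hz']
  obtain ⟨R, hR⟩ := hbd.subset_ball w₁
  refine cara_noretract F hF ?_ w₁ R ?_
  · intro z
    by_cases hz : z ∈ W
    · simp only [F, if_pos hz]
      refine mul_ne_zero (Complex.exp_ne_zero _) (fun h => h0' ?_)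
      rw [← sub_eq_zero.1 h]; exact subset_closure hz
    · simp only [F, if_neg hz]
      intro h
      rw [sub_eq_zero.1 h] at hz
      exact hz h1
  · intro z hz
    refine if_neg fun hzW => ?_
    have := hR (hWD hzW)
    rw [mem_ball, dist_eq_norm] at this
    linarith

lemma cara_ulc (X : Set ℂ) (hX : IsCompact X) (hlc : LocallyConnectedSpace X) {ε : ℝ} (hε : 0 < ε) :
    ∃ η > 0, ∀ a ∈ X, ∀ b ∈ X, dist a b < η → ∃ L : Set ℂ, L ⊆ X ∧ IsPreconnected L ∧ a ∈ L ∧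
      b ∈ L ∧ L ⊆ ball a ε := by
  have : CompactSpace X := isCompact_iff_compactSpace.1 hX
  let c : X → Set X := fun x => connectedComponentIn (ball x (ε/2)) x
  obtain ⟨δ, hδ, h⟩ := lebesgue_number_lemma_of_metric (s := (Set.univ : Set X)) (c := c)
    isCompact_univ (fun x => isOpen_ball.connectedComponentIn)
    (fun x _ => Set.mem_iUnion.2 ⟨x, mem_connectedComponentIn (mem_ball_self (by positivity))⟩)
  refine ⟨δ, hδ, fun a ha b hb hab => ?_⟩
  obtain ⟨i, hi⟩ := h ⟨a, ha⟩ (Set.mem_univ _)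
  refine ⟨Subtype.val '' c i, by simp, 
    isPreconnected_connectedComponentIn.image _ continuous_subtype_val.continuousOn,
    ⟨⟨a, ha⟩, hi (mem_ball_self hδ), rfl⟩, ⟨⟨b, hb⟩, hi ?_, rfl⟩, ?_⟩
  · rw [mem_ball, dist_comm]; exact hab
  · rintro _ ⟨x, hx, rfl⟩
    have h1 := connectedComponentIn_subset _ _ hx
    have h2 := connectedComponentIn_subset _ _ (hi (mem_ball_self hδ))
    rw [mem_ball] at h1 h2 ⊢
    have := dist_triangle_right x ⟨a, ha⟩ i
    calc dist (x : ℂ) a = dist x ⟨a, ha⟩ := rfl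
      _ < ε := by linarith

def caraStrip : Set ℂ := {u | u.im ∈ Set.Ioo (-(Real.pi/2)) (Real.pi/2)}

lemma caraStrip_open : IsOpen caraStrip := isOpen_Ioo.preimage Complex.continuous_im

section
open MeasureTheory ENNReal

lemma cara_area (f : ℂ → ℂ) (hf : DifferentiableOn ℂ f caraStrip) (hi : Set.InjOn f caraStrip)
    (hb : Bornology.IsBounded (f '' caraStrip)) :
    ∫⁻ u in caraStrip, ‖deriv f u‖ₑ ^ 2 < ⊤ := by
  have h := lintegral_abs_det_fderiv_eq_addHaar_image volume caraStrip_open.measurableSet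
    (f := f) (f' := fun u => (fderiv ℂ f u).restrictScalars ℝ) 
    (fun u hu => ((hf.differentiableAt (caraStrip_open.mem_nhds hu)).hasFDerivAt.restrictScalars ℝ).hasFDerivWithinAt) hi
  have h2 : ∀ u, ENNReal.ofReal |((fderiv ℂ f u).restrictScalars ℝ).det| = ‖deriv f u‖ₑ ^ 2 := by
    intro u
    have h3 : ((fderiv ℂ f u).restrictScalars ℝ).det = ‖deriv f u‖ ^ 2 := by
      simp [ContinuousLinearMap.det, LinearMap.det_restrictScalars, Algebra.norm_complex_apply, Complex.normSq_eq_norm_sq]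
    rw [h3, abs_of_nonneg (by positivity), ENNReal.ofReal_pow (norm_nonneg _), ofReal_norm]
  simp only [h2] at h
  rw [h]
  exact hb.measure_lt_top

lemma cara_slice (f : ℂ → ℂ) (h : ∫⁻ u in caraStrip, ‖deriv f u‖ₑ ^ 2 < ⊤) {η M : ℝ}
    (hη : 0 < η) : ∃ s < M,
    ∫⁻ t in Set.Ioo (-(Real.pi/2)) (Real.pi/2), ‖deriv f (s + t * Complex.I)‖ₑ ^ 2 < ENNReal.ofReal η := by
  have hm : Measurable (fun u => ‖deriv f u‖ₑ ^ 2) := (measurable_deriv f).enorm.pow_const _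
  let k : ℝ → ENNReal := fun s =>
    ∫⁻ t in Set.Ioo (-(Real.pi/2)) (Real.pi/2), ‖deriv f (s + t * Complex.I)‖ₑ ^ 2
  have e1 : ∫⁻ u in caraStrip, ‖deriv f u‖ₑ ^ 2 = ∫⁻ s, k s := by
    rw [← lintegral_indicator caraStrip_open.measurableSet,
      ← Complex.volume_preserving_equiv_real_prod.symm.lintegral_comp 
        (hm.indicator caraStrip_open.measurableSet),
      Measure.volume_eq_prod, lintegral_prod]
    · refine lintegral_congr fun s => ?_
      simp only [k]
      rw [← lintegral_indicator measurableSet_Ioo]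
      refine lintegral_congr fun t => ?_
      have e : Complex.measurableEquivRealProd.symm (s, t) = s + t * Complex.I := by
        apply Complex.ext <;> simp [Complex.measurableEquivRealProd_symm_apply]
      rw [e]
      simp [Set.indicator, caraStrip]
    · refine Measurable.aemeasurable ?_
      exact (hm.indicator caraStrip_open.measurableSet).comp (MeasurableEquiv.measurable _)
  by_contra hcon
  push Not at hcon
  have : ∫⁻ s in Set.Iio M, ENNReal.ofReal η ≤ ∫⁻ s, k s :=
    (setLIntegral_mono' measurableSet_Iio (fun s hs => hcon s hs)).trans
      (setLIntegral_le_lintegral _ _)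
  rw [← e1] at this
  simp [hη] at this
  exact h.ne this

lemma cara_holder (f : ℂ → ℂ) (hf : DifferentiableOn ℂ f caraStrip) {s E l : ℝ} (hl : 0 < l)
    (hE : 0 ≤ E)
    (h : ∫⁻ t in Set.Ioo (-(Real.pi/2)) (Real.pi/2), ‖deriv f (s + t * Complex.I)‖ₑ ^ 2
      < ENNReal.ofReal E) {a b : ℝ} (ha : a ∈ Set.Ioo (-(Real.pi/2)) (Real.pi/2))
    (hb : b ∈ Set.Ioo (-(Real.pi/2)) (Real.pi/2)) :
    dist (f (s + a * Complex.I)) (f (s + b * Complex.I)) ≤ l * |b - a| + E / l := by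
  wlog hab : a ≤ b generalizing a b
  · rw [dist_comm, abs_sub_comm]; exact this hb ha (le_of_not_ge hab)
  have hsub : Set.Icc a b ⊆ Set.Ioo (-(Real.pi/2)) (Real.pi/2) := Set.Icc_subset_Ioo ha.1 hb.2
  have hmem : ∀ t ∈ Set.Icc a b, (s + t * Complex.I : ℂ) ∈ caraStrip := by
    intro t ht
    simpa [caraStrip] using hsub ht
  have hd : ∀ t ∈ Set.uIcc a b, HasDerivAt (fun t : ℝ => f (s + t * Complex.I))
      (deriv f (s + t * Complex.I) * Complex.I) t := by
    intro t ht
    rw [Set.uIcc_of_le hab] at ht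
    have h1 := (hf.differentiableAt (caraStrip_open.mem_nhds (hmem t ht))).hasDerivAt
    have h2 : HasDerivAt (fun t : ℝ => (s + t * Complex.I : ℂ)) Complex.I t := by
      simpa using ((Complex.ofRealCLM.hasDerivAt (x := t)).mul_const Complex.I).const_add (s : ℂ)
    exact h1.comp t h2
  have hcont : ContinuousOn (fun t : ℝ => deriv f (s + t * Complex.I) * Complex.I) (Set.uIcc a b) := by
    rw [Set.uIcc_of_le hab]
    refine ContinuousOn.mul ?_ continuousOn_const
    exact (hf.deriv caraStrip_open).continuousOn.comp (by fun_prop) hmem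
  have hint := intervalIntegral.integral_eq_sub_of_hasDerivAt hd hcont.intervalIntegrable
  rw [dist_comm, dist_eq_norm, ← hint, intervalIntegral.integral_of_le hab, abs_of_nonneg (sub_nonneg.2 hab)]
  have hpos : 0 ≤ l * (b - a) + E / l := by
    have := sub_nonneg.2 hab
    positivity
  rw [← ENNReal.ofReal_le_ofReal_iff hpos, ofReal_norm]
  refine (enorm_integral_le_lintegral_enorm _).trans ?_
  have hpt : ∀ z : ℂ, ‖z * Complex.I‖ₑ ≤ ENNReal.ofReal l + ENNReal.ofReal (1 / l) * ‖z‖ₑ ^ 2 := by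
    intro z
    rw [← ofReal_norm, ← ofReal_norm, ← ENNReal.ofReal_pow (norm_nonneg _), 
      ← ENNReal.ofReal_mul (by positivity), ← ENNReal.ofReal_add hl.le (by positivity)]
    apply ENNReal.ofReal_le_ofReal
    rw [norm_mul, Complex.norm_I, mul_one]
    have : l + 1 / l * ‖z‖ ^ 2 = (l ^ 2 + ‖z‖ ^ 2) / l := by field_simp
    rw [this, le_div_iff₀ hl]
    nlinarith [sq_nonneg (l - ‖z‖), norm_nonneg z]
  refine (lintegral_mono fun t => hpt _).trans ?_
  rw [lintegral_add_left measurable_const, lintegral_const_mul' _ _ (by simp)]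
  have hE2 : ∫⁻ t in Set.Ioc a b, ‖deriv f (s + t * Complex.I)‖ₑ ^ 2 ≤ ENNReal.ofReal E :=
    (lintegral_mono_set (Set.Ioc_subset_Icc_self.trans hsub)).trans h.le
  rw [ENNReal.ofReal_add (by have := sub_nonneg.2 hab; positivity) (by positivity)]
  refine add_le_add ?_ ?_
  · simp [ENNReal.ofReal_mul hl.le]
  · refine (mul_le_mul_right hE2 _).trans ?_
    rw [← ENNReal.ofReal_mul (by positivity)]
    apply ENNReal.ofReal_le_ofReal
    apply le_of_eq; ring

lemma cara_ends (f : ℂ → ℂ) (hf : DifferentiableOn ℂ f caraStrip) {s η : ℝ} (hη : 0 < η)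
    (h : ∫⁻ t in Set.Ioo (-(Real.pi/2)) (Real.pi/2), ‖deriv f (s + t * Complex.I)‖ₑ ^ 2
      < ENNReal.ofReal (η ^ 2)) :
    ∃ k : ℝ → ℂ, ContinuousOn k (Set.Icc (-(Real.pi/2)) (Real.pi/2)) ∧
      (∀ t ∈ Set.Ioo (-(Real.pi/2)) (Real.pi/2), k t = f (s + t * Complex.I)) ∧
      ∀ t ∈ Set.Icc (-(Real.pi/2)) (Real.pi/2), ∀ t' ∈ Set.Icc (-(Real.pi/2)) (Real.pi/2),
        dist (k t) (k t') ≤ 5 * η := by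
  have hpi := Real.pi_pos
  set J := Set.Ioo (-(Real.pi/2)) (Real.pi/2) with hJ
  have hcl : closure J = Set.Icc (-(Real.pi/2)) (Real.pi/2) := closure_Ioo (by linarith)
  rw [← hcl]
  set g : ℝ → ℂ := fun t => f (s + t * Complex.I) with hg
  have huc : UniformContinuousOn g J := by
    rw [Metric.uniformContinuousOn_iff]
    intro ε hε
    have hl : 0 < 2 * η ^ 2 / ε := by positivity
    refine ⟨ε / 2 / (2 * η ^ 2 / ε), by positivity, fun x hx y hy hxy => ?_⟩
    have := cara_holder f hf hl (sq_nonneg η) h hx hy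
    refine this.trans_lt ?_
    have e1 : η ^ 2 / (2 * η ^ 2 / ε) = ε / 2 := by field_simp
    rw [Real.dist_eq, abs_sub_comm, lt_div_iff₀ hl] at hxy
    rw [e1]; nlinarith
  have hlim : ∀ x ∈ closure J, ∃ y, Filter.Tendsto g (nhdsWithin x J) (nhds y) := by
    intro x hx
    have : (nhdsWithin x J).NeBot := mem_closure_iff_nhdsWithin_neBot.1 hx
    have hc : Cauchy (nhdsWithin x J) := cauchy_nhds.mono nhdsWithin_le_nhds
    exact cauchy_map_iff_exists_tendsto.1 (hc.map_of_le huc (Filter.le_principal_iff.2 self_mem_nhdsWithin))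
  have hk : ContinuousOn (extendFrom J g) (closure J) := continuousOn_extendFrom subset_rfl hlim
  have hkJ : ∀ t ∈ J, extendFrom J g t = g t := fun t ht =>
    extendFrom_eq (subset_closure ht) (huc.continuousOn t ht)
  refine ⟨extendFrom J g, hk, hkJ, fun t ht t' ht' => ?_⟩
  have hcpt : IsCompact (extendFrom J g '' closure J) := by
    refine IsCompact.image_of_continuousOn ?_ hk
    rw [hcl]; exact isCompact_Icc
  have hJd : diam (extendFrom J g '' J) ≤ 5 * η := by
    refine diam_le_of_forall_dist_le (by positivity) ?_
    rintro _ ⟨x, hx, rfl⟩ _ ⟨y, hy, rfl⟩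
    rw [hkJ x hx, hkJ y hy]
    refine (cara_holder f hf hη (sq_nonneg η) h hx hy).trans ?_
    have e1 : η ^ 2 / η = η := by field_simp
    have e2 : |y - x| ≤ 4 := by
      rw [abs_le]
      have := Real.pi_lt_four
      constructor <;> linarith [hx.1, hx.2, hy.1, hy.2]
    rw [e1]; nlinarith
  have hsub := hk.image_closure
  have hb : Bornology.IsBounded (extendFrom J g '' J) :=
    hcpt.isBounded.subset (Set.image_mono subset_closure)
  calc dist _ _ ≤ diam (closure (extendFrom J g '' J)) :=
        dist_le_diam_of_mem hb.closure (hsub ⟨t, ht, rfl⟩) (hsub ⟨t', ht', rfl⟩)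
    _ ≤ 5 * η := by rw [diam_closure]; exact hJd

end

lemma caraStrip_convex : Convex ℝ caraStrip :=
  (convex_Ioo _ _).linear_preimage Complex.imLm

lemma cara_strip_main (D : Set ℂ) (hD : IsOpen D) (hDc : IsPreconnected D)
    (hbd : Bornology.IsBounded D) (hlc : LocallyConnectedSpace (frontier D))
    (f : ℂ → ℂ) (hf : DifferentiableOn ℂ f caraStrip) (hi : Set.InjOn f caraStrip)
    (him : f '' caraStrip = D) {ε : ℝ} (hε : 0 < ε) :
    ∃ s : ℝ, ∃ a : ℂ, ∀ u ∈ caraStrip, u.re < s → f u ∈ ball a ε := by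
  have hpi := Real.pi_pos
  have hz0 : (0 : ℂ) ∈ caraStrip := by simp [caraStrip, hpi]
  have hz1 : (1 : ℂ) ∈ caraStrip := by simp [caraStrip, hpi]
  have hfD : ∀ u ∈ caraStrip, f u ∈ D := fun u hu => him ▸ Set.mem_image_of_mem f hu
  have hop : ∀ V ⊆ caraStrip, IsOpen V → IsOpen (f '' V) := by
    rcases (hf.analyticOnNhd caraStrip_open).is_constant_or_isOpen caraStrip_convex.isPreconnected
      with ⟨w, hw⟩ | h
    · exact absurd (hi hz0 hz1 ((hw 0 hz0).trans (hw 1 hz1).symm)) zero_ne_one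
    · exact h
  have hcl : ∀ U ⊆ caraStrip, ∀ u ∈ caraStrip, f u ∈ closure (f '' U) → u ∈ closure U := by
    intro U hU u hu hfu
    rw [_root_.mem_closure_iff] at hfu ⊢
    intro V hV huV
    obtain ⟨_, ⟨v, hv, rfl⟩, ⟨v', hv', hvv⟩⟩ := hfu (f '' (V ∩ caraStrip))
      (hop _ Set.inter_subset_right (hV.inter caraStrip_open)) ⟨u, ⟨huV, hu⟩, rfl⟩
    have := hi (hU hv') hv.2 hvv
    exact ⟨v, hv.1, this ▸ hv'⟩
  have hdis : Disjoint (frontier D) D := by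
    rw [hD.frontier_eq]; exact Set.disjoint_sdiff_left
  obtain ⟨ε₀, hε₀, hball⟩ := Metric.isOpen_iff.1 hD (f 0) (hfD 0 hz0)
  set e := min ε ε₀ with he
  have hepos : 0 < e := lt_min hε hε₀
  have hfc : IsCompact (frontier D) :=
    Metric.isCompact_of_isClosed_isBounded isClosed_frontier
      (hbd.closure.subset frontier_subset_closure)
  obtain ⟨η₀, hη₀, hulc⟩ := cara_ulc (frontier D) hfc hlc hepos
  set η := min e η₀ / 6 with hηdef
  have hη : 0 < η := by have := lt_min hepos hη₀; positivity
  have hηe : 5 * η < e := by have := min_le_left e η₀; have := lt_min hepos hη₀; linarith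
  have hηη : 5 * η < η₀ := by have := min_le_right e η₀; have := lt_min hepos hη₀; linarith
  obtain ⟨s, hs0, hs⟩ := cara_slice f (cara_area f hf hi (him ▸ hbd)) (M := 0)
    (show 0 < η ^ 2 by positivity)
  obtain ⟨k, hk, hkf, hkd⟩ := cara_ends f hf hη hs
  set J := Set.Icc (-(Real.pi/2)) (Real.pi/2) with hJ
  have hst : ∀ t ∈ Set.Ioo (-(Real.pi/2)) (Real.pi/2), (s + t * Complex.I : ℂ) ∈ caraStrip := by
    intro t ht; simpa [caraStrip] using ht
  have hclJ : closure (Set.Ioo (-(Real.pi/2)) (Real.pi/2)) = J := closure_Ioo (by linarith)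
  -- endpoints lie on the frontier
  have hend : ∀ t ∈ J, t ∉ Set.Ioo (-(Real.pi/2)) (Real.pi/2) → k t ∈ frontier D := by
    intro t ht htn
    have hmem : ∀ S ⊆ Set.Ioo (-(Real.pi/2)) (Real.pi/2), t ∈ closure S →
        k t ∈ closure (f '' ((fun t : ℝ => (s + t * Complex.I : ℂ)) '' S)) := by
      intro S hS htS
      have h1 : ContinuousWithinAt k S t :=
        (hk t ht).mono (hS.trans Set.Ioo_subset_Icc_self)
      have h2 := h1.mem_closure_image htS
      refine closure_mono ?_ h2
      rintro _ ⟨x, hx, rfl⟩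
      exact ⟨_, ⟨x, hx, rfl⟩, (hkf x (hS hx)).symm⟩
    rw [hD.frontier_eq]
    constructor
    · refine closure_mono ?_ (hmem _ subset_rfl (hclJ ▸ ht))
      rintro _ ⟨_, ⟨x, hx, rfl⟩, rfl⟩
      exact hfD _ (hst x hx)
    · intro hkD
      rw [← him] at hkD
      obtain ⟨u, hu, huk⟩ := hkD
      have hne : u.im ≠ t := by rintro rfl; exact htn hu
      set r := |u.im - t| with hr
      have hrpos : 0 < r := abs_pos.2 (sub_ne_zero.2 hne)
      have htS : t ∈ closure (Set.Ioo (-(Real.pi/2)) (Real.pi/2) ∩ ball t (r/2)) := by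
        rw [_root_.mem_closure_iff]
        intro V hV htV
        have h3 : t ∈ closure (Set.Ioo (-(Real.pi/2)) (Real.pi/2)) := hclJ ▸ ht
        obtain ⟨x, hx, hx'⟩ := _root_.mem_closure_iff.1 h3 (V ∩ ball t (r/2)) (hV.inter isOpen_ball)
          ⟨htV, mem_ball_self (by positivity)⟩
        exact ⟨x, hx.1, hx', hx.2⟩
      have h4 := hmem _ Set.inter_subset_left htS
      rw [← huk] at h4
      have h5 := hcl _ (by rintro _ ⟨x, hx, rfl⟩; exact hst x hx.1) u hu h4
      obtain ⟨_, hv1, ⟨x, hx, rfl⟩⟩ := _root_.mem_closure_iff.1 h5 (Complex.im ⁻¹' ball u.im (r/2))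
        (isOpen_ball.preimage Complex.continuous_im) (mem_ball_self (by positivity))
      have h6 := hx.2
      simp [Real.dist_eq] at hv1 h6
      have := abs_sub_le u.im x t
      rw [abs_sub_comm u.im x] at this
      linarith
  have hJl : -(Real.pi/2) ∈ J := ⟨le_rfl, by linarith⟩
  have hJr : Real.pi/2 ∈ J := ⟨by linarith, le_rfl⟩
  have hendl := hend _ hJl (by simp)
  have hendr := hend _ hJr (by simp)
  set a := k (-(Real.pi/2)) with ha
  obtain ⟨L, hLf, hLc, haL, hbL, hLb⟩ := hulc a hendl (k (Real.pi/2)) hendr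
    ((hkd _ hJl _ hJr).trans_lt hηη)
  refine ⟨s, a, fun u hu hus => ?_⟩
  refine ball_subset_ball (min_le_left ε ε₀) ?_
  by_contra hcon
  have hUo : IsOpen (caraStrip ∩ {v | v.re < s}) :=
    caraStrip_open.inter (isOpen_lt Complex.continuous_re continuous_const)
  set U := caraStrip ∩ {v : ℂ | v.re < s} with hU
  have hUcl : ∀ v ∈ closure U, v.re ≤ s := by
    intro v hv
    refine closure_minimal (s := U) (t := {v : ℂ | v.re ≤ s}) (fun x hx => (show x.re < s from hx.2).le)
      (isClosed_le Complex.continuous_re continuous_const) hv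
  have hWo : IsOpen (f '' U) := hop U Set.inter_subset_left hUo
  have hWD : f '' U ⊆ D := by rintro _ ⟨v, hv, rfl⟩; exact hfD v hv.1
  refine cara_sep D (f '' U) (k '' J) L hD hDc hbd hWD ?_ ?_ ?_ hLc hLf (w₀ := f 0) (w₁ := f u)
    (c := a) (ε := e) haL ?_ hLb ⟨u, ⟨hu, hus⟩, rfl⟩ (hfD 0 hz0) ?_ hcon ?_
  · intro z hz
    have hzcl : z ∈ closure (f '' U) := frontier_subset_closure hz
    by_cases hzD : z ∈ D
    · right
      rw [← him] at hzD
      obtain ⟨v, hv, rfl⟩ := hzD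
      have hvc := hUcl v (hcl U Set.inter_subset_left v hv hzcl)
      rcases hvc.lt_or_eq with h | h
      · rw [hWo.frontier_eq] at hz
        exact absurd ⟨v, ⟨hv, h⟩, rfl⟩ hz.2
      · refine ⟨v.im, Set.Ioo_subset_Icc_self hv, ?_⟩
        rw [hkf _ hv, ← h, Complex.re_add_im]
    · left
      rw [hD.frontier_eq]
      exact ⟨closure_mono hWD hzcl, hzD⟩
  · exact (isCompact_Icc.image_of_continuousOn hk).isClosed
  · rintro _ ⟨⟨t, ht, rfl⟩, hf'⟩
    rcases Set.eq_endpoints_or_mem_Ioo_of_mem_Icc ht with rfl | rfl | h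
    · exact haL
    · exact hbL
    · rw [hkf t h] at hf'
      exact absurd rfl (hdis.ne_of_mem hf' (hfD _ (hst t h)))
  · rintro _ ⟨t, ht, rfl⟩
    exact (hkd t ht _ hJl).trans_lt hηe
  · intro h
    have := hUcl 0 (hcl U Set.inter_subset_left 0 hz0 h)
    simp at this
    linarith
  · intro h
    rw [mem_ball, dist_comm] at h
    exact hdis.ne_of_mem hendl (hball (h.trans_le (min_le_right ε ε₀))) rfl

lemma cara_cayley_to {ζ u : ℂ} (hζ : ‖ζ‖ = 1) (hu : u ∈ caraStrip) :
    1 + Complex.exp u ≠ 0 ∧ ζ * ((1 - Complex.exp u) / (1 + Complex.exp u)) ∈ ball (0:ℂ) 1 := by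
  have hre : 0 < (Complex.exp u).re := by
    rw [Complex.exp_re]
    exact mul_pos (Real.exp_pos _) (Real.cos_pos_of_mem_Ioo hu)
  set w := Complex.exp u
  have hne : 1 + w ≠ 0 := by
    intro h
    have := congrArg Complex.re h
    simp at this
    linarith
  refine ⟨hne, ?_⟩
  rw [mem_ball_zero_iff, norm_mul, hζ, one_mul, norm_div, div_lt_one (norm_pos_iff.2 hne)]
  rw [← sq_lt_sq₀ (norm_nonneg _) (norm_nonneg _), ← Complex.normSq_eq_norm_sq,
    ← Complex.normSq_eq_norm_sq, Complex.normSq_apply, Complex.normSq_apply]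
  simp
  nlinarith

lemma cara_cayley_from {ζ z : ℂ} (hζ : ‖ζ‖ = 1) (hz : z ∈ ball (0:ℂ) 1) :
    ζ - z ≠ 0 ∧ ζ + z ≠ 0 ∧ Complex.log ((ζ - z) / (ζ + z)) ∈ caraStrip := by
  rw [mem_ball_zero_iff] at hz
  have h1 : ζ - z ≠ 0 := by
    intro h; rw [sub_eq_zero.1 h] at hζ; linarith
  have h2 : ζ + z ≠ 0 := by
    intro h; rw [eq_neg_of_add_eq_zero_left h, norm_neg] at hζ; linarith
  refine ⟨h1, h2, ?_⟩
  have h3 : 0 < ((ζ - z) / (ζ + z)).re := by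
    rw [Complex.div_re, ← add_div]
    refine div_pos ?_ (Complex.normSq_pos.2 h2)
    have e1 : ζ.re * ζ.re + ζ.im * ζ.im = 1 := by
      rw [← Complex.normSq_apply, Complex.normSq_eq_norm_sq, hζ]; norm_num
    have e2 : z.re * z.re + z.im * z.im < 1 := by
      rw [← Complex.normSq_apply, Complex.normSq_eq_norm_sq]
      nlinarith [norm_nonneg z]
    simp
    nlinarith
  have h4 : |Complex.arg ((ζ - z) / (ζ + z))| < Real.pi / 2 :=
    Complex.abs_arg_lt_pi_div_two_iff.2 (Or.inl h3)
  simpa [caraStrip, Complex.log_im] using abs_lt.1 h4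

lemma cara_limit (D : Set ℂ) (hD : IsOpen D) (hDc : IsPreconnected D)
    (hbd : Bornology.IsBounded D) (hlc : LocallyConnectedSpace (frontier D))
    (φ : ℂ → ℂ) (hφ : DifferentiableOn ℂ φ (ball (0:ℂ) 1))
    (hbij : Set.BijOn φ (ball (0:ℂ) 1) D) {ζ : ℂ} (hζ : ‖ζ‖ = 1) :
    ∃ y, Filter.Tendsto φ (nhdsWithin ζ (ball (0:ℂ) 1)) (nhds y) := by
  have hζ0 : ζ ≠ 0 := norm_pos_iff.1 (by rw [hζ]; exact one_pos)
  let c : ℂ → ℂ := fun u => ζ * ((1 - Complex.exp u) / (1 + Complex.exp u))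
  have hcT : ∀ z ∈ ball (0:ℂ) 1, c (Complex.log ((ζ - z) / (ζ + z))) = z := by
    intro z hz
    obtain ⟨h1, h2, h3⟩ := cara_cayley_from hζ hz
    simp only [c]
    rw [Complex.exp_log (div_ne_zero h1 h2)]
    have e1 : 1 - (ζ - z) / (ζ + z) = 2 * z / (ζ + z) := by field_simp; ring
    have e2 : 1 + (ζ - z) / (ζ + z) = 2 * ζ / (ζ + z) := by field_simp; ring
    rw [e1, e2]
    field_simp
  have hcinj : Set.InjOn c caraStrip := by
    intro u hu v hv huv
    have hu1 := (cara_cayley_to hζ hu).1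
    have hv1 := (cara_cayley_to hζ hv).1
    have h1 := mul_left_cancel₀ hζ0 huv
    rw [div_eq_div_iff hu1 hv1] at h1
    have h2 : Complex.exp u = Complex.exp v := by linear_combination (-1/2) * h1
    have := Real.pi_pos
    have hu2 : -(Real.pi/2) < u.im ∧ u.im < Real.pi/2 := hu
    have hv2 : -(Real.pi/2) < v.im ∧ v.im < Real.pi/2 := hv
    exact Complex.exp_inj_of_neg_pi_lt_of_le_pi (by linarith) (by linarith) (by linarith)
      (by linarith) h2
  have hcm : Set.MapsTo c caraStrip (ball (0:ℂ) 1) := fun u hu => (cara_cayley_to hζ hu).2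
  have hcd : DifferentiableOn ℂ c caraStrip := by
    refine DifferentiableOn.const_mul (DifferentiableOn.div ?_ ?_ ?_) _
    · exact (Differentiable.differentiableOn (by fun_prop))
    · exact (Differentiable.differentiableOn (by fun_prop))
    · exact fun u hu => (cara_cayley_to hζ hu).1
  have him : (φ ∘ c) '' caraStrip = D := by
    have : c '' caraStrip = ball (0:ℂ) 1 :=
      Set.Subset.antisymm (Set.image_subset_iff.2 hcm)
        (fun z hz => ⟨_, (cara_cayley_from hζ hz).2.2, hcT z hz⟩)
    rw [Set.image_comp, this, hbij.image_eq]
  have hne : (nhdsWithin ζ (ball (0:ℂ) 1)).NeBot := by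
    rw [← mem_closure_iff_nhdsWithin_neBot, closure_ball _ one_ne_zero]
    simp [hζ]
  refine cauchy_map_iff_exists_tendsto.1 (Metric.cauchy_iff.2 ⟨inferInstance, fun ε hε => ?_⟩)
  obtain ⟨s, a, hsa⟩ := cara_strip_main D hD hDc hbd hlc (φ ∘ c) (hφ.comp hcd hcm)
    (hbij.injOn.comp hcinj hcm) him (half_pos hε)
  refine ⟨ball a (ε/2), ?_, fun x hx y hy => ?_⟩
  · have hcts : ContinuousAt (fun z => ‖(ζ - z) / (ζ + z)‖) ζ := by
      refine ContinuousAt.norm (ContinuousAt.div (by fun_prop) (by fun_prop) ?_)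
      rw [← two_mul]; simp [hζ0]
    have hev : ∀ᶠ z in nhds ζ, ‖(ζ - z) / (ζ + z)‖ < Real.exp s := 
      hcts.eventually_lt_const (by simpa using Real.exp_pos s)
    rw [Filter.mem_map]
    filter_upwards [self_mem_nhdsWithin, mem_nhdsWithin_of_mem_nhds hev] with z hz hz2
    obtain ⟨h1, h2, h3⟩ := cara_cayley_from hζ hz
    have := hsa _ h3 (by
      rw [Complex.log_re]
      exact (Real.log_lt_iff_lt_exp (norm_pos_iff.2 (div_ne_zero h1 h2))).2 hz2)
    simpa [Function.comp, hcT z hz] using this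
  · have := dist_triangle_right x y a
    rw [mem_ball] at hx hy
    linarith

theorem caratheodory_continuous_extension
    (D : Set ℂ) (hD : IsOpen D) (hDc : IsConnected D)
    (hbd : Bornology.IsBounded D) [SimplyConnectedSpace D]
    (φ : ℂ → ℂ) (hφ : DifferentiableOn ℂ φ (ball (0:ℂ) 1))
    (hbij : Set.BijOn φ (ball (0:ℂ) 1) D)
    (hlc : LocallyConnectedSpace (frontier D)) :
    ∃ ψ : ℂ → ℂ, ContinuousOn ψ (closedBall (0:ℂ) 1) ∧
      (∀ z ∈ ball (0:ℂ) 1, ψ z = φ z) ∧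
      ψ '' closedBall (0:ℂ) 1 = closure D := by
  have hcl : closure (ball (0:ℂ) 1) = closedBall 0 1 := closure_ball _ one_ne_zero
  have hlim : ∀ z ∈ closedBall (0:ℂ) 1,
      ∃ y, Filter.Tendsto φ (nhdsWithin z (ball (0:ℂ) 1)) (nhds y) := by
    intro z hz
    rcases (mem_closedBall_zero_iff.1 hz).lt_or_eq with h | h
    · exact ⟨φ z, hφ.continuousOn z (mem_ball_zero_iff.2 h)⟩
    · exact cara_limit D hD hDc.isPreconnected hbd hlc φ hφ hbij h
  have hc : ContinuousOn (extendFrom (ball (0:ℂ) 1) φ) (closedBall 0 1) :=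
    continuousOn_extendFrom hcl.ge hlim
  have he : ∀ z ∈ ball (0:ℂ) 1, extendFrom (ball (0:ℂ) 1) φ z = φ z :=
    extendFrom_extends hφ.continuousOn
  have him : extendFrom (ball (0:ℂ) 1) φ '' ball (0:ℂ) 1 = D := by
    rw [Set.image_congr he, hbij.image_eq]
  refine ⟨_, hc, he, Set.Subset.antisymm ?_ ?_⟩
  · rw [← hcl] at hc ⊢
    have := hc.image_closure
    rwa [him] at this
  · refine closure_minimal ?_ ((isCompact_closedBall _ _).image_of_continuousOn hc).isClosed
    rw [← him]
    exact Set.image_mono ball_subset_closedBall
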